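/- Let μ0 < μ1 < … < μk be a maximal chain of stable matchings from the man-optimal to the woman-optimal stable matching with corresponding rotation sequence ρ_0, …, ρ_{k-1} (μ_{i+1} is the elimination of ρ_i from μ_i). If ρ_i is a type 1 or type 2 predecessor of ρ_j, then i < j. In particular, the predecessor graph G(Π) is acyclic. -/

import Mathlib

/-- A matching market: men `M` and women `W`; each man has a strict preference
order over `W ∪ {∅}` and each woman over `M ∪ {∅}`, encoded by injective rank
functions (a strictly higher rank means strictly more preferred); `none`
plays the role of `∅` (being unmatched), and partners ranked below `none`
are unacceptable. -/
structure Market (M W : Type*) where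
  mRank : M → Option W → ℕ
  wRank : W → Option M → ℕ
  mRank_inj : ∀ m, Function.Injective (mRank m)
  wRank_inj : ∀ w, Function.Injective (wRank w)

/-- A matching: `mu` assigns each man a woman or `none`, `nu` assigns each
woman a man or `none`, and `μ(m) = w ↔ μ(w) = m`. -/
structure Matching (M W : Type*) where
  mu : M → Option W
  nu : W → Option M
  consistent : ∀ m w, mu m = some w ↔ nu w = some m

variable {M W : Type*}

/-- Every matched agent prefers their partner to `∅`. -/
def Market.IndivRational (mkt : Market M W) (μ : Matching M W) : Prop :=
  (∀ m w, μ.mu m = some w → mkt.mRank m none < mkt.mRank m (some w)) ∧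
  (∀ w m, μ.nu w = some m → mkt.wRank w none < mkt.wRank w (some m))

/-- `(m, w)` is a blocking pair for `μ`: they are not matched to each other,
`w ≻_m μ(m)` and `m ≻_w μ(w)`. -/
def Market.Blocking (mkt : Market M W) (μ : Matching M W) (m : M) (w : W) : Prop :=
  μ.mu m ≠ some w ∧
  mkt.mRank m (μ.mu m) < mkt.mRank m (some w) ∧
  mkt.wRank w (μ.nu w) < mkt.wRank w (some m)

/-- A matching is stable if it is individually rational and has no blocking pair. -/
def Market.Stable (mkt : Market M W) (μ : Matching M W) : Prop :=
  mkt.IndivRational μ ∧ ∀ m w, ¬ mkt.Blocking μ m w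

/-- Woman-dominance: `μ ≥ μ'` iff every woman weakly prefers her partner in `μ`. -/
def Market.Dom (mkt : Market M W) (μ μ' : Matching M W) : Prop :=
  ∀ w, mkt.wRank w (μ'.nu w) ≤ mkt.wRank w (μ.nu w)

/-- Strict woman-dominance: `μ > μ'`. -/
def Market.StrictDom (mkt : Market M W) (μ μ' : Matching M W) : Prop :=
  mkt.Dom μ μ' ∧ μ ≠ μ'

/-- `μ'` covers `μ` in the woman-dominance order on stable matchings. -/
def Market.Covers (mkt : Market M W) (μ' μ : Matching M W) : Prop :=
  mkt.StrictDom μ' μ ∧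
  ¬ ∃ μ'' : Matching M W, mkt.Stable μ'' ∧ mkt.StrictDom μ' μ'' ∧ mkt.StrictDom μ'' μ

/-- `μ'` is the elimination of the list `ρ = [(w_0,m_0),…,(w_{k-1},m_{k-1})]`
from `μ`: `k ≥ 2`, the women (resp. men) in `ρ` are distinct, `μ(w_i) = m_i`,
`μ'(m_i) = w_{(i+1) mod k}`, and every agent not appearing in `ρ` has the same
partner in `μ` and `μ'`. -/
def Matching.IsElimOf (μ' μ : Matching M W) (ρ : List (W × M)) : Prop :=
  2 ≤ ρ.length ∧
  (ρ.map Prod.fst).Nodup ∧ (ρ.map Prod.snd).Nodup ∧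
  (∀ i : Fin ρ.length, μ.nu (ρ.get i).1 = some (ρ.get i).2) ∧
  (∀ i : Fin ρ.length, μ'.mu (ρ.get i).2 =
    some (ρ.get ⟨(i.1 + 1) % ρ.length,
      Nat.mod_lt _ (Nat.lt_of_le_of_lt (Nat.zero_le _) i.isLt)⟩).1) ∧
  (∀ m : M, m ∉ ρ.map Prod.snd → μ'.mu m = μ.mu m) ∧
  (∀ w : W, w ∉ ρ.map Prod.fst → μ'.nu w = μ.nu w)

/-- `ρ` is a rotation exposed in `μ`: the elimination of `ρ` from `μ` is a
stable matching which covers `μ`. -/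
def Market.ExposedRotation (mkt : Market M W) (μ : Matching M W) (ρ : List (W × M)) : Prop :=
  ∃ μ' : Matching M W, Matching.IsElimOf μ' μ ρ ∧ mkt.Stable μ' ∧ mkt.Covers μ' μ

/-- `ρ` belongs to the set `Π` of all rotations, i.e. it is exposed in some
stable matching. -/
def Market.InPi (mkt : Market M W) (ρ : List (W × M)) : Prop :=
  ∃ μ : Matching M W, mkt.Stable μ ∧ mkt.ExposedRotation μ ρ

/-- The cyclically next index in a rotation. -/
def RotNext (ρ : List (W × M)) (i : Fin ρ.length) : Fin ρ.length :=
  ⟨(i.1 + 1) % ρ.length, Nat.mod_lt _ (Nat.lt_of_le_of_lt (Nat.zero_le _) i.isLt)⟩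

/-- The cyclically previous index in a rotation. -/
def RotPrev (ρ : List (W × M)) (i : Fin ρ.length) : Fin ρ.length :=
  ⟨(i.1 + ρ.length - 1) % ρ.length, Nat.mod_lt _ (Nat.lt_of_le_of_lt (Nat.zero_le _) i.isLt)⟩

/-- `ρ` moves man `m` from `w` to `w'` (i.e. `m = m_i`, `w = w_i`, `w' = w_{i+1}`). -/
def MovesManFromTo (ρ : List (W × M)) (m : M) (w w' : W) : Prop :=
  ∃ i : Fin ρ.length, (ρ.get i).2 = m ∧ (ρ.get i).1 = w ∧ (ρ.get (RotNext ρ i)).1 = w'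

/-- `ρ` moves woman `w` from `m` to `m'` (i.e. `w = w_i`, `m = m_i`, `m' = m_{i-1}`). -/
def MovesWomanFromTo (ρ : List (W × M)) (w : W) (m m' : M) : Prop :=
  ∃ i : Fin ρ.length, (ρ.get i).1 = w ∧ (ρ.get i).2 = m ∧ (ρ.get (RotPrev ρ i)).2 = m'

/-- `ρ1` is a type 1 predecessor of `ρ2`: `ρ1` moves some man `m` to a woman
`w` and the pair `(w, m)` appears in `ρ2`. -/
def Market.Type1Pred (_mkt : Market M W) (ρ1 ρ2 : List (W × M)) : Prop :=
  ∃ (w : W) (m : M), (∃ w0 : W, MovesManFromTo ρ1 m w0 w) ∧ (w, m) ∈ ρ2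

/-- `ρ1` is a type 2 predecessor of `ρ2`: `ρ1` moves some woman `w` from a man
strictly below `m` to a man strictly above `m`, and `ρ2` moves `m` from a woman
strictly above `w` to a woman strictly below `w`. -/
def Market.Type2Pred (mkt : Market M W) (ρ1 ρ2 : List (W × M)) : Prop :=
  ∃ (m : M) (w : W) (mlo mhi : M) (whi wlo : W),
    MovesWomanFromTo ρ1 w mlo mhi ∧
    mkt.wRank w (some mlo) < mkt.wRank w (some m) ∧
    mkt.wRank w (some m) < mkt.wRank w (some mhi) ∧
    MovesManFromTo ρ2 m whi wlo ∧
    mkt.mRank m (some wlo) < mkt.mRank m (some w) ∧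
    mkt.mRank m (some w) < mkt.mRank m (some whi)

/-- `ρ1` is a (type 1 or type 2) predecessor of `ρ2`; these are the edges of
the predecessor graph `G(Π)`. -/
def Market.Pred (mkt : Market M W) (ρ1 ρ2 : List (W × M)) : Prop :=
  mkt.Type1Pred ρ1 ρ2 ∨ mkt.Type2Pred ρ1 ρ2

/-- `σ` assigns each woman the more preferred of her partners in `μ` and `μ'`. -/
def Market.IsJoin (mkt : Market M W) (μ μ' σ : Matching M W) : Prop :=
  ∀ w, σ.nu w = if mkt.wRank w (μ'.nu w) ≤ mkt.wRank w (μ.nu w) then μ.nu w else μ'.nu w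

/-- `σ` assigns each woman the less preferred of her partners in `μ` and `μ'`. -/
def Market.IsMeet (mkt : Market M W) (μ μ' σ : Matching M W) : Prop :=
  ∀ w, σ.nu w = if mkt.wRank w (μ.nu w) ≤ mkt.wRank w (μ'.nu w) then μ.nu w else μ'.nu w

/-!
The opposition of interests between the two sides makes the stable matchings a lattice, so when
`ρ` leads from `μ` to a cover `μ'`, every stable `ν` satisfies `(ν ⊔ μ) ⊓ μ' ∈ {μ, μ'}`: either all
the women of `ρ` are at least as well off in `ν` as after `ρ`, in which case `ν` is past `ρ`, or
they are all at most as well off as before `ρ`. If `ρ₁` precedes `ρ₂`, then every stable matching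
past `ρ₂` is past `ρ₁`, and a matching in which `ρ₂` is exposed is past `ρ₁` but not past `ρ₂`.
Hence the set of stable matchings past a rotation strictly decreases along the edges of the
predecessor graph. The delicate point is that a single covering step cannot make a man `m` jump over
a woman `w` who would have preferred `m` to her partner: a cover moves each man to the
first woman after his current partner who prefers him to hers.
-/

/-- `τ` is the restriction of `g` to its periodic points, extended by the identity. -/
theorem exists_perm_forall_eq_or_fixed {α : Type*} [Finite α] [Nonempty α] (g : α → α) :
    ∃ τ : Equiv.Perm α, (∀ a, τ a = g a ∨ τ a = a) ∧ ∃ a, τ a = g a := by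
  classical
  let τ : Equiv.Perm (Function.periodicPts g) := (Function.bijOn_periodicPts g).equiv g
  have τ_apply {a : α} (ha : a ∈ Function.periodicPts g) : τ.ofSubtype a = g a :=
    Equiv.Perm.ofSubtype_apply_of_mem τ ha
  obtain ⟨a, ha⟩ : (Function.periodicPts g).Nonempty := by
    obtain ⟨i, j, hij, heq⟩ := Finite.exists_ne_map_eq_of_infinite
      fun n : ℕ => g^[n] (Classical.arbitrary α)
    wlog hlt : i < j generalizing i j
    · exact this j i hij.symm heq.symm (hij.lt_or_gt.resolve_left hlt)
    refine ⟨g^[i] (Classical.arbitrary α),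
      Function.mk_mem_periodicPts (Nat.sub_pos_of_lt hlt) ?_⟩
    rw [Function.IsPeriodicPt, Function.IsFixedPt, ← Function.iterate_add_apply,
      Nat.sub_add_cancel hlt.le]
    exact heq.symm
  refine ⟨τ.ofSubtype, fun b => ?_, a, τ_apply ha⟩
  by_cases hb : b ∈ Function.periodicPts g
  · exact .inl (τ_apply hb)
  · exact .inr (Equiv.Perm.ofSubtype_apply_of_not_mem τ hb)

namespace Matching

variable {μ ν : Matching M W} {m m' : M} {w : W}

theorem eq_of_mu_eq_some (h : μ.mu m = some w) (h' : μ.mu m' = some w) : m = m' :=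
  Option.some.inj (((μ.consistent m w).1 h).symm.trans ((μ.consistent m' w).1 h'))

theorem ext_nu (h : ∀ w, μ.nu w = ν.nu w) : μ = ν := by
  have hnu : μ.nu = ν.nu := funext h
  have hmu : μ.mu = ν.mu := by
    funext m
    ext w
    rw [μ.consistent, ν.consistent, h]
  cases μ
  cases ν
  congr

theorem finite_subtype_of_matched (hfin : Finite M ∨ Finite W) {p : M → Prop}
    (hp : ∀ m, p m → ∃ w, μ.mu m = some w) : Finite {m // p m} := by
  rcases hfin with _ | _
  · infer_instance
  · refine Finite.of_injective (fun m : {m // p m} => μ.mu m) fun m m' heq => ?_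
    obtain ⟨w, hw⟩ := hp m m.2
    exact Subtype.ext (eq_of_mu_eq_some hw (heq.symm.trans hw))

/-- The same matching with the roles of men and women exchanged. -/
def swap (μ : Matching M W) : Matching W M where
  mu := μ.nu
  nu := μ.mu
  consistent w m := (μ.consistent m w).symm

/-- The matching in which each man `m` takes over the partner of the man `τ m`. -/
def permute (μ : Matching M W) (τ : Equiv.Perm M) : Matching M W where
  mu m := μ.mu (τ m)
  nu w := (μ.nu w).map τ.symm
  consistent m w := by
    simp only [μ.consistent, Option.map_eq_some_iff, Equiv.symm_apply_eq, exists_eq_right]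

end Matching

namespace Market

variable {mkt : Market M W} {μ μ' ν σ : Matching M W} {m : M} {w : W}

/-- The same market with the roles of men and women exchanged. -/
def swap (mkt : Market M W) : Market W M where
  mRank := mkt.wRank
  wRank := mkt.mRank
  mRank_inj := mkt.wRank_inj
  wRank_inj := mkt.mRank_inj

theorem Stable.swap (h : mkt.Stable μ) : mkt.swap.Stable μ.swap :=
  ⟨⟨h.1.2, h.1.1⟩, fun w m ⟨hne, hw, hm⟩ =>
    h.2 m w ⟨fun hmu => hne ((μ.consistent m w).1 hmu), hm, hw⟩⟩

theorem Stable.none_le_mRank (h : mkt.Stable μ) (m : M) :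
    mkt.mRank m none ≤ mkt.mRank m (μ.mu m) := by
  rcases hm : μ.mu m with _ | w
  · exact le_rfl
  · exact (h.1.1 m w hm).le

theorem Stable.none_le_wRank (h : mkt.Stable μ) (w : W) :
    mkt.wRank w none ≤ mkt.wRank w (μ.nu w) :=
  h.swap.none_le_mRank w

theorem Stable.le_wRank_of_mRank_le (h : mkt.Stable μ)
    (hm : mkt.mRank m (μ.mu m) ≤ mkt.mRank m (some w)) :
    mkt.wRank w (some m) ≤ mkt.wRank w (μ.nu w) := by
  by_cases hmw : μ.mu m = some w
  · rw [(μ.consistent m w).1 hmw]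
  · have hlt := lt_of_le_of_ne hm ((mkt.mRank_inj m).ne hmw)
    exact not_lt.1 fun hw => h.2 m w ⟨hmw, hlt, hw⟩

theorem stable_of_forall_le (hm : ∀ m, mkt.mRank m none ≤ mkt.mRank m (μ.mu m))
    (hw : ∀ w, mkt.wRank w none ≤ mkt.wRank w (μ.nu w))
    (hmw : ∀ m w, mkt.mRank m (μ.mu m) < mkt.mRank m (some w) →
      mkt.wRank w (some m) ≤ mkt.wRank w (μ.nu w)) : mkt.Stable μ := by
  refine ⟨⟨fun m w h => ?_, fun w m h => ?_⟩, fun m w ⟨_, hlt, hlt'⟩ => (hmw m w hlt).not_gt hlt'⟩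
  · exact h ▸ lt_of_le_of_ne (hm m) ((mkt.mRank_inj m).ne (by simp [h]))
  · exact h ▸ lt_of_le_of_ne (hw w) ((mkt.wRank_inj w).ne (by simp [h]))

theorem Stable.exists_husband_lt (hν : mkt.Stable ν)
    (h : mkt.wRank w (ν.nu w) < mkt.wRank w (μ.nu w)) :
    ∃ m, μ.mu m = some w ∧ mkt.mRank m (μ.mu m) < mkt.mRank m (ν.mu m) := by
  rcases hw : μ.nu w with _ | m
  · rw [hw] at h
    exact absurd h (hν.none_le_wRank w).not_gt
  · have hm := (μ.consistent m w).2 hw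
    refine ⟨m, hm, not_le.1 fun hle => ?_⟩
    rw [hm] at hle
    exact (hw ▸ h).not_ge (hν.le_wRank_of_mRank_le hle)

theorem Stable.exists_wife_lt (hν : mkt.Stable ν)
    (h : mkt.mRank m (ν.mu m) < mkt.mRank m (μ.mu m)) :
    ∃ w, μ.mu m = some w ∧ mkt.wRank w (μ.nu w) < mkt.wRank w (ν.nu w) := by
  obtain ⟨w, hw, hlt⟩ := hν.swap.exists_husband_lt (μ := μ.swap) h
  exact ⟨w, (μ.consistent m w).2 hw, hlt⟩

/-- Marrying in `ν` injects the men who are better off in `ν` into the women who are better off in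
`μ`, and marrying in `μ` injects the latter into the former; by finiteness both are onto. -/
theorem Stable.exists_wife_gt (hfin : Finite M ∨ Finite W) (hμ : mkt.Stable μ)
    (hν : mkt.Stable ν) (h : mkt.mRank m (μ.mu m) < mkt.mRank m (ν.mu m)) :
    ∃ w, μ.mu m = some w ∧ mkt.wRank w (ν.nu w) < mkt.wRank w (μ.nu w) := by
  let A := {m // mkt.mRank m (μ.mu m) < mkt.mRank m (ν.mu m)}
  let B := {w // mkt.wRank w (ν.nu w) < mkt.wRank w (μ.nu w)}
  have exists_wife (a : A) : ∃ b : B, ν.mu a.1 = some b.1 := by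
    obtain ⟨w, hw, hlt⟩ := hμ.exists_wife_lt a.2
    exact ⟨⟨w, hlt⟩, hw⟩
  have exists_husband (b : B) : ∃ a : A, μ.mu a.1 = some b.1 := by
    obtain ⟨m, hm, hlt⟩ := hν.exists_husband_lt b.2
    exact ⟨⟨m, hlt⟩, hm⟩
  choose wife hwife using exists_wife
  choose husband hhusband using exists_husband
  have wife_injective : Function.Injective wife := fun a a' heq =>
    Subtype.ext (ν.eq_of_mu_eq_some (hwife a) (heq ▸ hwife a'))
  have husband_injective : Function.Injective husband := fun b b' heq =>
    Subtype.ext (Option.some.inj ((hhusband b).symm.trans (heq ▸ hhusband b')))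
  have : Finite A := ν.finite_subtype_of_matched hfin fun m hm => ⟨wife ⟨m, hm⟩, hwife ⟨m, hm⟩⟩
  obtain ⟨a, ha⟩ :=
    Finite.surjective_of_injective (husband_injective.comp wife_injective) ⟨m, h⟩
  have husband_wife : (husband (wife a)).1 = m := congrArg Subtype.val ha
  exact ⟨wife a, husband_wife ▸ hhusband (wife a), (wife a).2⟩

theorem Stable.exists_husband_gt (hfin : Finite M ∨ Finite W) (hμ : mkt.Stable μ)
    (hν : mkt.Stable ν) (h : mkt.wRank w (μ.nu w) < mkt.wRank w (ν.nu w)) :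
    ∃ m, μ.mu m = some w ∧ mkt.mRank m (ν.mu m) < mkt.mRank m (μ.mu m) := by
  obtain ⟨m, hm, hlt⟩ := hμ.swap.exists_wife_gt hfin.symm hν.swap h
  exact ⟨m, (μ.consistent m w).2 hm, hlt⟩

theorem Stable.mRank_lt_iff_wRank_lt (hfin : Finite M ∨ Finite W) (hμ : mkt.Stable μ)
    (hν : mkt.Stable ν) (hmw : μ.mu m = some w) :
    mkt.mRank m (μ.mu m) < mkt.mRank m (ν.mu m) ↔
      mkt.wRank w (ν.nu w) < mkt.wRank w (μ.nu w) := by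
  constructor
  · intro h
    obtain ⟨w', hw', hlt⟩ := hμ.exists_wife_gt hfin hν h
    obtain rfl : w = w' := Option.some.inj (hmw.symm.trans hw')
    exact hlt
  · intro h
    obtain ⟨m', hm', hlt⟩ := hν.exists_husband_lt h
    exact μ.eq_of_mu_eq_some hmw hm' ▸ hlt

theorem Stable.mRank_le_iff_wRank_le (hfin : Finite M ∨ Finite W) (hμ : mkt.Stable μ)
    (hν : mkt.Stable ν) (hmw : μ.mu m = some w) :
    mkt.mRank m (μ.mu m) ≤ mkt.mRank m (ν.mu m) ↔
      mkt.wRank w (ν.nu w) ≤ mkt.wRank w (μ.nu w) := by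
  have h := hμ.swap.mRank_lt_iff_wRank_lt hfin.symm hν.swap ((μ.consistent m w).1 hmw)
  exact not_lt.symm.trans (h.symm.not.trans not_lt)

theorem IsJoin.wRank_eq_max (h : mkt.IsJoin μ ν σ) (w : W) :
    mkt.wRank w (σ.nu w) = max (mkt.wRank w (μ.nu w)) (mkt.wRank w (ν.nu w)) := by
  rw [h w, apply_ite (mkt.wRank w), max_comm, max_def]

theorem IsMeet.wRank_eq_min (h : mkt.IsMeet μ ν σ) (w : W) :
    mkt.wRank w (σ.nu w) = min (mkt.wRank w (μ.nu w)) (mkt.wRank w (ν.nu w)) := by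
  rw [h w, apply_ite (mkt.wRank w), min_def]

theorem Stable.exists_isJoin (hfin : Finite M ∨ Finite W) (hμ : mkt.Stable μ)
    (hν : mkt.Stable ν) :
    ∃ σ, mkt.Stable σ ∧ mkt.IsJoin μ ν σ ∧ mkt.swap.IsMeet μ.swap ν.swap σ.swap := by
  let σ : Matching M W :=
    { mu := fun m => if mkt.mRank m (μ.mu m) ≤ mkt.mRank m (ν.mu m) then μ.mu m else ν.mu m
      nu := fun w => if mkt.wRank w (ν.nu w) ≤ mkt.wRank w (μ.nu w) then μ.nu w else ν.nu w
      consistent := fun m w => by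
        rw [ite_eq_iff, ite_eq_iff, ← μ.consistent, ← ν.consistent, not_le, not_le]
        exact or_congr (and_congr_left fun h => hμ.mRank_le_iff_wRank_le hfin hν h)
          (and_congr_left fun h => hν.mRank_lt_iff_wRank_lt hfin hμ h) }
  have hjoin : mkt.IsJoin μ ν σ := fun _ => rfl
  have hmeet : mkt.swap.IsMeet μ.swap ν.swap σ.swap := fun _ => rfl
  have hσm (m : M) : mkt.mRank m (σ.mu m) = min (mkt.mRank m (μ.mu m)) (mkt.mRank m (ν.mu m)) :=
    hmeet.wRank_eq_min m
  refine ⟨σ, stable_of_forall_le (fun m => ?_) (fun w => ?_) (fun m w h => ?_), hjoin, hmeet⟩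
  · exact hσm m ▸ le_min (hμ.none_le_mRank m) (hν.none_le_mRank m)
  · exact hjoin.wRank_eq_max w ▸ le_max_of_le_left (hμ.none_le_wRank w)
  · rw [hσm, min_lt_iff] at h
    rw [hjoin.wRank_eq_max, le_max_iff]
    exact h.imp (fun h => hμ.le_wRank_of_mRank_le h.le) fun h => hν.le_wRank_of_mRank_le h.le

theorem Stable.exists_isMeet (hfin : Finite M ∨ Finite W) (hμ : mkt.Stable μ)
    (hν : mkt.Stable ν) : ∃ σ, mkt.Stable σ ∧ mkt.IsMeet μ ν σ := by
  obtain ⟨σ, hσ, -, hmeet⟩ := hμ.swap.exists_isJoin hfin.symm hν.swap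
  exact ⟨σ.swap, hσ.swap, hmeet⟩

theorem Covers.eq_or_eq (h : mkt.Covers μ' μ) (hσ : mkt.Stable σ) (hle : mkt.Dom μ' σ)
    (hge : mkt.Dom σ μ) : σ = μ ∨ σ = μ' := by
  by_contra! hne
  exact h.2 ⟨σ, hσ, ⟨hle, hne.2.symm⟩, hge, hne.1⟩

theorem Covers.forall_le_or_forall_ge (hfin : Finite M ∨ Finite W) (hμ : mkt.Stable μ)
    (hμ' : mkt.Stable μ') (h : mkt.Covers μ' μ) (hν : mkt.Stable ν) :
    (∀ w, mkt.wRank w (μ.nu w) < mkt.wRank w (μ'.nu w) →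
      mkt.wRank w (ν.nu w) ≤ mkt.wRank w (μ.nu w)) ∨
    (∀ w, mkt.wRank w (μ.nu w) < mkt.wRank w (μ'.nu w) →
      mkt.wRank w (μ'.nu w) ≤ mkt.wRank w (ν.nu w)) := by
  obtain ⟨α, hα, hjoin, -⟩ := hν.exists_isJoin hfin hμ
  obtain ⟨β, hβ, hmeet⟩ := hα.exists_isMeet hfin hμ'
  have hβw (w : W) : mkt.wRank w (β.nu w) =
      min (max (mkt.wRank w (ν.nu w)) (mkt.wRank w (μ.nu w))) (mkt.wRank w (μ'.nu w)) := by
    rw [hmeet.wRank_eq_min, hjoin.wRank_eq_max]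
  have hle : mkt.Dom μ' β := fun w => hβw w ▸ min_le_right _ _
  have hge : mkt.Dom β μ := fun w => hβw w ▸ le_min (le_max_right _ _) (h.1.1 w)
  rcases h.eq_or_eq hβ hle hge with rfl | rfl
  · refine .inl fun w hlt => ?_
    have := hβw w
    omega
  · refine .inr fun w hlt => ?_
    have := hβw w
    omega

/-- `w` is acceptable to `m`, he ranks her below his partner in `μ`, and she prefers him to her
partner in `μ`: she is a woman to whom `m` can move if he gives up his partner. -/
def IsCandidate (mkt : Market M W) (μ : Matching M W) (m : M) (w : W) : Prop :=
  mkt.mRank m none < mkt.mRank m (some w) ∧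
  mkt.mRank m (some w) < mkt.mRank m (μ.mu m) ∧
  mkt.wRank w (μ.nu w) < mkt.wRank w (some m)

/-- `w` is the candidate `m` likes best: the woman to whom every rotation exposed in `μ` and
involving `m` moves him. -/
def IsSuccessor (mkt : Market M W) (μ : Matching M W) (m : M) (w : W) : Prop :=
  mkt.IsCandidate μ m w ∧
  ∀ w', mkt.IsCandidate μ m w' → mkt.mRank m (some w') ≤ mkt.mRank m (some w)

theorem IsCandidate.exists_isSuccessor (h : mkt.IsCandidate μ m w) :
    ∃ s, mkt.IsSuccessor μ m s := by
  let rank : W → ℕ := fun w => mkt.mRank m (some w)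
  have rank_injective : Function.Injective rank :=
    (mkt.mRank_inj m).comp (Option.some_injective W)
  have hfinite : {w | mkt.IsCandidate μ m w}.Finite :=
    ((Set.finite_Iio (mkt.mRank m (μ.mu m))).preimage rank_injective.injOn).subset
      fun _ hw => hw.2.1
  obtain ⟨s, hs, hmax⟩ := Set.exists_max_image _ rank hfinite ⟨w, h⟩
  exact ⟨s, hs, hmax⟩

theorem Stable.exists_mu_eq_isCandidate (hfin : Finite M ∨ Finite W) (hμ : mkt.Stable μ)
    (hμ' : mkt.Stable μ') (h : mkt.mRank m (μ'.mu m) < mkt.mRank m (μ.mu m)) :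
    ∃ w, μ'.mu m = some w ∧ mkt.IsCandidate μ m w := by
  obtain ⟨w, hw, hlt⟩ := hμ'.exists_wife_gt hfin hμ h
  rw [(μ'.consistent m w).1 hw] at hlt
  exact ⟨w, hw, hμ'.1.1 m w hw, hw ▸ h, hlt⟩

theorem IsSuccessor.wRank_le (hfin : Finite M ∨ Finite W) (hμ : mkt.Stable μ)
    (hμ' : mkt.Stable μ') (h : mkt.mRank m (μ'.mu m) < mkt.mRank m (μ.mu m))
    (hs : mkt.IsSuccessor μ m w) : mkt.wRank w (some m) ≤ mkt.wRank w (μ'.nu w) := by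
  obtain ⟨w', hw', hcand⟩ := hμ.exists_mu_eq_isCandidate hfin hμ' h
  exact hμ'.le_wRank_of_mRank_le (hw' ▸ hs.2 w' hcand)

theorem Stable.exists_isSuccessor_mu_eq (hfin : Finite M ∨ Finite W) (hμ : mkt.Stable μ)
    (hμ' : mkt.Stable μ') (h : mkt.mRank m (μ'.mu m) < mkt.mRank m (μ.mu m)) :
    ∃ s x, mkt.IsSuccessor μ m s ∧ μ.mu x = some s ∧
      mkt.mRank x (μ'.mu x) < mkt.mRank x (μ.mu x) := by
  obtain ⟨w, -, hcand⟩ := hμ.exists_mu_eq_isCandidate hfin hμ' h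
  obtain ⟨s, hs⟩ := hcand.exists_isSuccessor
  have hlt : mkt.wRank s (μ.nu s) < mkt.wRank s (μ'.nu s) :=
    hs.1.2.2.trans_le (hs.wRank_le hfin hμ hμ' h)
  obtain ⟨x, hx, hx'⟩ := hμ.exists_husband_gt hfin hμ' hlt
  exact ⟨s, x, hs, hx, hx'⟩

/-- Sending each man who is worse off in `μ'` to the `μ`-partner of his successor is a self-map of
these men; `τ` permutes its periodic points. -/
theorem Stable.exists_perm_isSuccessor (hfin : Finite M ∨ Finite W) (hμ : mkt.Stable μ)
    (hμ' : mkt.Stable μ') (h : mkt.mRank m (μ'.mu m) < mkt.mRank m (μ.mu m)) :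
    ∃ τ : Equiv.Perm M, (∃ x, μ.mu (τ x) ≠ μ.mu x) ∧
      ∀ x, τ x = x ∨ mkt.mRank x (μ'.mu x) < mkt.mRank x (μ.mu x) ∧
        ∃ s, μ.mu (τ x) = some s ∧ mkt.IsSuccessor μ x s := by
  classical
  let D := {x // mkt.mRank x (μ'.mu x) < mkt.mRank x (μ.mu x)}
  have exists_next (x : D) : ∃ y : D, ∃ s, μ.mu y.1 = some s ∧ mkt.IsSuccessor μ x.1 s := by
    obtain ⟨s, y, hs, hy, hlt⟩ := hμ.exists_isSuccessor_mu_eq hfin hμ' x.2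
    exact ⟨⟨y, hlt⟩, s, hy, hs⟩
  choose nextMan nextWoman hmu hsucc using exists_next
  have : Finite D := μ'.finite_subtype_of_matched hfin fun x hx =>
    (hμ.exists_mu_eq_isCandidate hfin hμ' hx).imp fun _ => And.left
  have : Nonempty D := ⟨⟨m, h⟩⟩
  obtain ⟨τ, hτ, x, hx⟩ := exists_perm_forall_eq_or_fixed nextMan
  refine ⟨τ.ofSubtype, ⟨x.1, ?_⟩, fun y => ?_⟩
  · rw [Equiv.Perm.ofSubtype_apply_coe, hx, hmu]
    intro heq
    exact (heq ▸ (hsucc x).1.2.1).false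
  · by_cases hy : mkt.mRank y (μ'.mu y) < mkt.mRank y (μ.mu y)
    · rw [Equiv.Perm.ofSubtype_apply_of_mem τ hy]
      rcases hτ ⟨y, hy⟩ with hnext | hfix
      · exact .inr ⟨hy, nextWoman ⟨y, hy⟩, hnext ▸ hmu ⟨y, hy⟩, hsucc ⟨y, hy⟩⟩
      · exact .inl (congrArg Subtype.val hfix)
    · exact .inl (Equiv.Perm.ofSubtype_apply_of_not_mem τ hy)

theorem Stable.of_forall_eq_or_isSuccessor (hμ : mkt.Stable μ) (hdom : mkt.Dom σ μ)
    (h : ∀ m, σ.mu m = μ.mu m ∨ ∃ s, σ.mu m = some s ∧ mkt.IsSuccessor μ m s) :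
    mkt.Stable σ := by
  refine stable_of_forall_le (fun m => ?_) (fun w => (hμ.none_le_wRank w).trans (hdom w))
    fun m w hmw => ?_
  · rcases h m with heq | ⟨s, heq, hs⟩
    · exact heq ▸ hμ.none_le_mRank m
    · exact heq ▸ hs.1.1.le
  · rcases le_or_gt (mkt.mRank m (μ.mu m)) (mkt.mRank m (some w)) with hle | hlt
    · exact (hμ.le_wRank_of_mRank_le hle).trans (hdom w)
    · rcases h m with heq | ⟨s, heq, hs⟩
      · exact absurd (heq ▸ hmw) hlt.not_gt
      · rw [heq] at hmw
        by_contra! hw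
        exact (hs.2 w ⟨hs.1.1.trans hmw, hlt, (hdom w).trans_lt hw⟩).not_gt hmw

theorem Covers.eq_or_isSuccessor (hfin : Finite M ∨ Finite W) (hμ : mkt.Stable μ)
    (hμ' : mkt.Stable μ') (hcov : mkt.Covers μ' μ) (m : M) :
    μ'.mu m = μ.mu m ∨ ∃ s, μ'.mu m = some s ∧ mkt.IsSuccessor μ m s := by
  obtain ⟨w, hw⟩ : ∃ w, μ'.nu w ≠ μ.nu w := by
    by_contra! heq
    exact hcov.1.2 (Matching.ext_nu heq)
  have hlt := lt_of_le_of_ne (hcov.1.1 w) ((mkt.wRank_inj w).ne hw.symm)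
  obtain ⟨x, -, hx⟩ := hμ.exists_husband_gt hfin hμ' hlt
  obtain ⟨τ, ⟨y, hy⟩, hτ⟩ := hμ.exists_perm_isSuccessor hfin hμ' hx
  let σ := μ.permute τ
  have hσm (m : M) : σ.mu m = μ.mu m ∨ ∃ s, σ.mu m = some s ∧ mkt.IsSuccessor μ m s :=
    (hτ m).imp (congrArg μ.mu) And.right
  have hσw (w : W) : mkt.wRank w (μ.nu w) ≤ mkt.wRank w (σ.nu w) ∧
      mkt.wRank w (σ.nu w) ≤ mkt.wRank w (μ'.nu w) := by
    rcases hw : σ.nu w with _ | m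
    · have : μ.nu w = none := Option.map_eq_none_iff.1 hw
      exact ⟨this ▸ le_rfl, this ▸ hcov.1.1 w⟩
    · have hmu : μ.mu (τ m) = some w := (σ.consistent m w).2 hw
      rcases hτ m with hfix | ⟨hm, s, heq, hs⟩
      · rw [hfix, μ.consistent] at hmu
        exact ⟨hmu ▸ le_rfl, hmu ▸ hcov.1.1 w⟩
      · obtain rfl : w = s := Option.some.inj (hmu.symm.trans heq)
        exact ⟨hs.1.2.2.le, hs.wRank_le hfin hμ hμ' hm⟩
  have hdom : mkt.Dom σ μ := fun w => (hσw w).1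
  have hσ : mkt.Stable σ := hμ.of_forall_eq_or_isSuccessor hdom hσm
  rcases hcov.eq_or_eq hσ (fun w => (hσw w).2) hdom with heq | heq
  · exact absurd (congrArg (Matching.mu · y) heq) hy
  · exact heq ▸ hσm m

theorem Covers.wRank_le_of_mRank_lt_of_lt (hfin : Finite M ∨ Finite W) (hμ : mkt.Stable μ)
    (hμ' : mkt.Stable μ') (hcov : mkt.Covers μ' μ)
    (h : mkt.mRank m (μ'.mu m) < mkt.mRank m (some w))
    (h' : mkt.mRank m (some w) < mkt.mRank m (μ.mu m)) :
    mkt.wRank w (some m) ≤ mkt.wRank w (μ.nu w) := by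
  by_contra! hw
  have hcand : mkt.IsCandidate μ m w := ⟨(hμ'.none_le_mRank m).trans_lt h, h', hw⟩
  rcases hcov.eq_or_isSuccessor hfin hμ hμ' m with heq | ⟨s, heq, hs⟩
  · exact (heq ▸ h).not_gt h'
  · exact (heq ▸ h).not_ge (hs.2 w hcand)

end Market

theorem rotNext_rotPrev (ρ : List (W × M)) (i : Fin ρ.length) : RotNext ρ (RotPrev ρ i) = i := by
  have hi := i.isLt
  ext
  simp only [RotNext, RotPrev]
  rw [Nat.mod_add_mod, Nat.sub_add_cancel (by omega), Nat.add_mod_right, Nat.mod_eq_of_lt hi]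

theorem rotPrev_rotNext (ρ : List (W × M)) (i : Fin ρ.length) : RotPrev ρ (RotNext ρ i) = i :=
  Function.LeftInverse.rightInverse_of_card_le (rotNext_rotPrev ρ) le_rfl i

theorem rotPrev_ne {ρ : List (W × M)} (hρ : 2 ≤ ρ.length) (i : Fin ρ.length) :
    RotPrev ρ i ≠ i := by
  have hi := i.isLt
  refine Fin.ne_of_val_ne ?_
  simp only [RotPrev]
  rcases Nat.eq_zero_or_pos i.1 with h | h
  · rw [h, Nat.mod_eq_of_lt (by omega)]
    omega
  · rw [Nat.sub_add_comm h, Nat.add_mod_right, Nat.mod_eq_of_lt (by omega)]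
    omega

section Moves

variable {ρ : List (W × M)} {μ μ' : Matching M W} {m m' : M} {w w' : W}

theorem MovesManFromTo.exists_movesWoman (h : MovesManFromTo ρ m w w') :
    ∃ m', MovesWomanFromTo ρ w' m' m := by
  obtain ⟨i, rfl, -, rfl⟩ := h
  exact ⟨_, RotNext ρ i, rfl, rfl, by rw [rotPrev_rotNext]⟩

theorem exists_movesWoman_of_mem (h : (w, m) ∈ ρ) : ∃ m', MovesWomanFromTo ρ w m m' := by
  obtain ⟨i, hi⟩ := List.get_of_mem h
  exact ⟨_, i, by rw [hi], by rw [hi], rfl⟩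

theorem Matching.IsElimOf.mu_of_movesMan (h : μ'.IsElimOf μ ρ) (hm : MovesManFromTo ρ m w w') :
    μ.mu m = some w ∧ μ'.mu m = some w' := by
  obtain ⟨i, rfl, rfl, rfl⟩ := hm
  exact ⟨(μ.consistent _ _).2 (h.2.2.2.1 i), h.2.2.2.2.1 i⟩

theorem Matching.IsElimOf.nu_of_movesWoman (h : μ'.IsElimOf μ ρ)
    (hw : MovesWomanFromTo ρ w m m') : μ.nu w = some m ∧ μ'.nu w = some m' := by
  obtain ⟨i, rfl, rfl, rfl⟩ := hw
  refine ⟨h.2.2.2.1 i, (μ'.consistent _ _).1 ?_⟩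
  have := h.2.2.2.2.1 (RotPrev ρ i)
  rwa [← RotNext, rotNext_rotPrev] at this

theorem MovesWomanFromTo.ne (h : MovesWomanFromTo ρ w m m') (hlen : 2 ≤ ρ.length)
    (hnodup : (ρ.map Prod.snd).Nodup) : m' ≠ m := by
  obtain ⟨i, -, rfl, rfl⟩ := h
  intro heq
  refine rotPrev_ne hlen i (Fin.ext ?_)
  exact (hnodup.getElem_inj_iff (hi := by simp) (hj := by simp)).1 (by simpa using heq)

end Moves

namespace Market

variable {mkt : Market M W} {μ ν : Matching M W} {ρ ρ₁ ρ₂ : List (W × M)} {m m' : M} {w w' : W}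

/-- `ν` is past `ρ`: every woman of `ρ` is at least as well off in `ν` as after the elimination
of `ρ`. The condition refers to `ρ` alone and not to a matching in which `ρ` is exposed. -/
def Past (mkt : Market M W) (ρ : List (W × M)) (ν : Matching M W) : Prop :=
  ∀ w m m', MovesWomanFromTo ρ w m m' → mkt.wRank w (some m') ≤ mkt.wRank w (ν.nu w)

theorem Past.of_dom (h : mkt.Past ρ μ) (hdom : mkt.Dom ν μ) : mkt.Past ρ ν :=
  fun w m m' hw => (h w m m' hw).trans (hdom w)

theorem ExposedRotation.wRank_lt (h : mkt.ExposedRotation μ ρ)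
    (hw : MovesWomanFromTo ρ w m m') : mkt.wRank w (some m) < mkt.wRank w (some m') := by
  obtain ⟨μ', helim, -, hcov⟩ := h
  obtain ⟨hμ, hμ'⟩ := helim.nu_of_movesWoman hw
  refine lt_of_le_of_ne (hμ ▸ hμ' ▸ hcov.1.1 w) ((mkt.wRank_inj w).ne ?_)
  exact (Option.some_injective M).ne (hw.ne helim.1 helim.2.2.1).symm

theorem ExposedRotation.not_past (h : mkt.ExposedRotation μ ρ) : ¬ mkt.Past ρ μ := by
  intro hpast
  have ⟨μ', helim, _⟩ := h
  have hpos : 0 < ρ.length := Nat.zero_lt_two.trans_le helim.1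
  obtain ⟨m', hw⟩ := exists_movesWoman_of_mem (ρ.get_mem ⟨0, hpos⟩)
  exact ((helim.nu_of_movesWoman hw).1 ▸ hpast _ _ _ hw).not_gt (h.wRank_lt hw)

theorem InPi.wRank_lt (h : mkt.InPi ρ) (hw : MovesWomanFromTo ρ w m m') :
    mkt.wRank w (some m) < mkt.wRank w (some m') :=
  h.elim fun _ hμ => hμ.2.wRank_lt hw

theorem InPi.wRank_le_of_not_past (hfin : Finite M ∨ Finite W) (h : mkt.InPi ρ)
    (hν : mkt.Stable ν) (hpast : ¬ mkt.Past ρ ν) (hw : MovesWomanFromTo ρ w m m') :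
    mkt.wRank w (ν.nu w) ≤ mkt.wRank w (some m) := by
  have hlt {w : W} {m m' : M} (hw : MovesWomanFromTo ρ w m m') :
      mkt.wRank w (some m) < mkt.wRank w (some m') := h.wRank_lt hw
  obtain ⟨μ, hμ, μ', helim, hμ', hcov⟩ := h
  rcases hcov.forall_le_or_forall_ge hfin hμ hμ' hν with hle | hge
  · obtain ⟨hm, hm'⟩ := helim.nu_of_movesWoman hw
    exact hm ▸ hle w (by rw [hm, hm']; exact hlt hw)
  · refine absurd (fun w m m' hw => ?_) hpast
    obtain ⟨hm, hm'⟩ := helim.nu_of_movesWoman hw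
    exact hm' ▸ hge w (by rw [hm, hm']; exact hlt hw)

theorem Type1Pred.exists_movesWoman (h : mkt.Type1Pred ρ₁ ρ₂) :
    ∃ w m₁ m m₂, MovesWomanFromTo ρ₁ w m₁ m ∧ MovesWomanFromTo ρ₂ w m m₂ := by
  obtain ⟨w, m, ⟨_, hm⟩, hmem⟩ := h
  obtain ⟨m₁, hm₁⟩ := hm.exists_movesWoman
  obtain ⟨m₂, hm₂⟩ := exists_movesWoman_of_mem hmem
  exact ⟨w, m₁, m, m₂, hm₁, hm₂⟩

theorem Pred.past_of_exposedRotation (hfin : Finite M ∨ Finite W) (h : mkt.Pred ρ₁ ρ₂)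
    (hρ₁ : mkt.InPi ρ₁) (hμ : mkt.Stable μ) (hρ₂ : mkt.ExposedRotation μ ρ₂) :
    mkt.Past ρ₁ μ := by
  by_contra hpast
  obtain ⟨μ', helim, hμ', hcov⟩ := hρ₂
  rcases h with h | ⟨m, w, mlo, mhi, whi, wlo, hw, hlo, -, hm, hwlo, hwhi⟩
  · obtain ⟨w, m₁, m, m₂, hw₁, hw₂⟩ := h.exists_movesWoman
    have hle := hρ₁.wRank_le_of_not_past hfin hμ hpast hw₁
    rw [(helim.nu_of_movesWoman hw₂).1] at hle
    exact hle.not_gt (hρ₁.wRank_lt hw₁)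
  · obtain ⟨hwhi', hwlo'⟩ := helim.mu_of_movesMan hm
    rw [← hwlo'] at hwlo
    rw [← hwhi'] at hwhi
    have hle := hcov.wRank_le_of_mRank_lt_of_lt hfin hμ hμ' hwlo hwhi
    exact ((hρ₁.wRank_le_of_not_past hfin hμ hpast hw).trans_lt hlo).not_ge hle

theorem Past.mRank_le (hfin : Finite M ∨ Finite W) (h : mkt.Past ρ ν) (hρ : mkt.InPi ρ)
    (hν : mkt.Stable ν) (hm : MovesManFromTo ρ m w w') :
    mkt.mRank m (ν.mu m) ≤ mkt.mRank m (some w') := by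
  obtain ⟨_, _, μ', helim, hμ', -⟩ := hρ
  obtain ⟨m', hw'⟩ := hm.exists_movesWoman
  have hmu := (helim.mu_of_movesMan hm).2
  have hnu := (helim.nu_of_movesWoman hw').2
  by_contra! hlt
  rw [← hmu, hμ'.mRank_lt_iff_wRank_lt hfin hν hmu, hnu] at hlt
  exact (h w' m' m hw').not_gt hlt

theorem Pred.past_of_past (hfin : Finite M ∨ Finite W) (h : mkt.Pred ρ₁ ρ₂)
    (hρ₁ : mkt.InPi ρ₁) (hρ₂ : mkt.InPi ρ₂) (hν : mkt.Stable ν) (hpast : mkt.Past ρ₂ ν) :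
    mkt.Past ρ₁ ν := by
  by_contra hpast₁
  rcases h with h | ⟨m, w, mlo, mhi, whi, wlo, hw, hlo, -, hm, hwlo, -⟩
  · obtain ⟨w, m₁, m, m₂, hw₁, hw₂⟩ := h.exists_movesWoman
    have hlt : mkt.wRank w (ν.nu w) < mkt.wRank w (ν.nu w) := calc
      mkt.wRank w (ν.nu w) ≤ mkt.wRank w (some m₁) :=
        hρ₁.wRank_le_of_not_past hfin hν hpast₁ hw₁
      _ < mkt.wRank w (some m) := hρ₁.wRank_lt hw₁
      _ < mkt.wRank w (some m₂) := hρ₂.wRank_lt hw₂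
      _ ≤ mkt.wRank w (ν.nu w) := hpast w m m₂ hw₂
    exact hlt.false
  · have hmw : mkt.mRank m (ν.mu m) < mkt.mRank m (some w) :=
      (hpast.mRank_le hfin hρ₂ hν hm).trans_lt hwlo
    have hwm : mkt.wRank w (ν.nu w) < mkt.wRank w (some m) :=
      (hρ₁.wRank_le_of_not_past hfin hν hpast₁ hw).trans_lt hlo
    exact (hν.le_wRank_of_mRank_le hmw.le).not_gt hwm

theorem Pred.setOf_past_ssubset (hfin : Finite M ∨ Finite W) (h : mkt.Pred ρ₁ ρ₂)
    (hρ₁ : mkt.InPi ρ₁) (hρ₂ : mkt.InPi ρ₂) :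
    {ν | mkt.Stable ν ∧ mkt.Past ρ₂ ν} ⊂ {ν | mkt.Stable ν ∧ mkt.Past ρ₁ ν} := by
  refine Set.ssubset_iff_exists.2
    ⟨fun ν hν => ⟨hν.1, h.past_of_past hfin hρ₁ hρ₂ hν.1 hν.2⟩, ?_⟩
  obtain ⟨μ, hμ, hexp⟩ := hρ₂
  exact ⟨μ, ⟨hμ, h.past_of_exposedRotation hfin hρ₁ hμ hexp⟩, fun hpast => hexp.not_past hpast.2⟩

theorem not_exists_pred_cycle (hfin : Finite M ∨ Finite W) (mkt : Market M W) :
    ¬ ∃ (n : ℕ) (c : Fin (n + 1) → List (W × M)),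
        (∀ i, mkt.InPi (c i)) ∧
        (∀ i : Fin n, mkt.Pred (c i.castSucc) (c i.succ)) ∧
        mkt.Pred (c (Fin.last n)) (c 0) := by
  rintro ⟨n, c, hin, hpred, hclose⟩
  have hanti : Antitone fun i => {ν | mkt.Stable ν ∧ mkt.Past (c i) ν} :=
    Fin.antitone_iff_succ_le.2 fun i => ((hpred i).setOf_past_ssubset hfin (hin _) (hin _)).subset
  exact (hclose.setOf_past_ssubset hfin (hin _) (hin _)).not_subset (hanti (Fin.zero_le _))

theorem lt_of_pred_of_forall_covers (hfin : Finite M ∨ Finite W) {k : ℕ}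
    {μ : Fin (k + 1) → Matching M W} (hst : ∀ i, mkt.Stable (μ i))
    (hcov : ∀ i : Fin k, mkt.Covers (μ i.succ) (μ i.castSucc)) {ρ : Fin k → List (W × M)}
    (hρ : ∀ i : Fin k, (μ i.succ).IsElimOf (μ i.castSucc) (ρ i)) {i j : Fin k}
    (hpred : mkt.Pred (ρ i) (ρ j)) : i < j := by
  have hexp (i : Fin k) : mkt.ExposedRotation (μ i.castSucc) (ρ i) :=
    ⟨μ i.succ, hρ i, hst i.succ, hcov i⟩
  have hmono : Monotone fun i w => mkt.wRank w ((μ i).nu w) :=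
    Fin.monotone_iff_le_succ.2 fun i => (hcov i).1.1
  have hpast : mkt.Past (ρ i) (μ j.castSucc) :=
    hpred.past_of_exposedRotation hfin ⟨_, hst _, hexp i⟩ (hst _) (hexp j)
  by_contra! hji
  exact (hexp i).not_past (hpast.of_dom (hmono (Fin.castSucc_le_castSucc_iff.2 hji)))

end Market

theorem predecessors_come_before_general {M W : Type*} (hfin : Finite M ∨ Finite W)
    (mkt : Market M W) (k : ℕ) (μ : Fin (k + 1) → Matching M W)
    (hst : ∀ i, mkt.Stable (μ i))
    (hcov : ∀ i : Fin k, mkt.Covers (μ i.succ) (μ i.castSucc))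
    (ρ : Fin k → List (W × M))
    (hρ : ∀ i : Fin k, Matching.IsElimOf (μ i.succ) (μ i.castSucc) (ρ i)) :
    (∀ i j : Fin k, mkt.Pred (ρ i) (ρ j) → i < j) ∧
    ¬ ∃ (n : ℕ) (c : Fin (n + 1) → List (W × M)),
        (∀ i, mkt.InPi (c i)) ∧
        (∀ i : Fin n, mkt.Pred (c i.castSucc) (c i.succ)) ∧
        mkt.Pred (c (Fin.last n)) (c 0) :=
  ⟨fun _ _ => mkt.lt_of_pred_of_forall_covers hfin hst hcov hρ, mkt.not_exists_pred_cycle hfin⟩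

/-- along a maximal chain of stable matchings from the
man-optimal to the woman-optimal matching with rotation sequence
`ρ_0, …, ρ_{k-1}`, if `ρ_i` is a (type 1 or type 2) predecessor of `ρ_j`
then `i < j`; in particular the predecessor graph `G(Π)` is acyclic. -/
theorem predecessors_come_before {M W : Type*} [Fintype M] [Fintype W]
    (mkt : Market M W) (k : ℕ) (μ : Fin (k + 1) → Matching M W)
    (hst : ∀ i, mkt.Stable (μ i))
    (hman : ∀ ν : Matching M W, mkt.Stable ν → mkt.Dom ν (μ 0))
    (hwom : ∀ ν : Matching M W, mkt.Stable ν → mkt.Dom (μ (Fin.last k)) ν)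
    (hcov : ∀ i : Fin k, mkt.Covers (μ i.succ) (μ i.castSucc))
    (ρ : Fin k → List (W × M))
    (hρ : ∀ i : Fin k, Matching.IsElimOf (μ i.succ) (μ i.castSucc) (ρ i)) :
    (∀ i j : Fin k, mkt.Pred (ρ i) (ρ j) → i < j) ∧
    ¬ ∃ (n : ℕ) (c : Fin (n + 1) → List (W × M)),
        (∀ i, mkt.InPi (c i)) ∧
        (∀ i : Fin n, mkt.Pred (c i.castSucc) (c i.succ)) ∧
        mkt.Pred (c (Fin.last n)) (c 0) :=
  predecessors_come_before_general (.inl inferInstance) mkt k μ hst hcov ρ hρ
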